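/- arXiv:1402.1384 — 4 statements merged into one kernel-verified Lean document; each statement's English description precedes it below -/
import Mathlib

section
/- For every ρ ∈ [0,1], R ∈ ℝ and Σ > 0, the function s ↦ log Z(R,√s) (the log-partition function viewed as a function of the variance s = Σ²) has derivative at s = Σ² equal to ((f_a(R,Σ) − R)² + f_c(R,Σ))/(2Σ⁴). -/
open MeasureTheory ProbabilityTheory

/-- The prior `P₀ = ρ·N(0,1) + (1-ρ)·δ₀`. -/
noncomputable def P0 (ρ : ℝ) : Measure ℝ :=
  ENNReal.ofReal ρ • gaussianReal 0 1 + ENNReal.ofReal (1 - ρ) • Measure.dirac 0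

/-- Partition function `Z(R,Σ) = ∫ exp(-(x-R)²/(2Σ²)) dP₀(x)`. -/
noncomputable def Zpart (ρ R σ : ℝ) : ℝ :=
  ∫ x, Real.exp (-(x - R) ^ 2 / (2 * σ ^ 2)) ∂(P0 ρ)

/-- Posterior mean `f_a(R,Σ)`. -/
noncomputable def fa (ρ R σ : ℝ) : ℝ :=
  (Zpart ρ R σ)⁻¹ * ∫ x, x * Real.exp (-(x - R) ^ 2 / (2 * σ ^ 2)) ∂(P0 ρ)

/-- Posterior variance `f_c(R,Σ)`. -/
noncomputable def fc (ρ R σ : ℝ) : ℝ :=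
  (Zpart ρ R σ)⁻¹ * (∫ x, x ^ 2 * Real.exp (-(x - R) ^ 2 / (2 * σ ^ 2)) ∂(P0 ρ))
    - fa ρ R σ ^ 2

/-- Boundedness of the second moment of a Gaussian weight of variance `s`. -/
lemma sq_mul_exp_neg_sq_div_le {s : ℝ} (hs : 0 < s) (y : ℝ) :
    y ^ 2 * Real.exp (-y ^ 2 / (2 * s)) ≤ 2 * s := by
  have h := Real.add_one_le_exp (y ^ 2 / (2 * s))
  rw [neg_div, Real.exp_neg, ← div_eq_mul_inv, div_le_iff₀ (Real.exp_pos _)]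
  have h2 : y ^ 2 = 2 * s * (y ^ 2 / (2 * s)) := by field_simp
  nlinarith

lemma exp_neg_sq_div_le_one {s : ℝ} (hs : 0 < s) (y : ℝ) :
    Real.exp (-y ^ 2 / (2 * s)) ≤ 1 := by
  rw [Real.exp_le_one_iff, neg_div, neg_nonpos]
  positivity

lemma hasDerivAt_exp_neg_sq_div {s : ℝ} (hs : s ≠ 0) (y : ℝ) :
    HasDerivAt (fun t => Real.exp (-y ^ 2 / (2 * t)))
      (y ^ 2 * Real.exp (-y ^ 2 / (2 * s)) / (2 * s ^ 2)) s := by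
  have h : HasDerivAt (fun t => -y ^ 2 / (2 * t)) (y ^ 2 / (2 * s ^ 2)) s := by
    refine ((hasDerivAt_const s (-y ^ 2)).fun_div ((hasDerivAt_id' s).const_mul 2)
      (mul_ne_zero two_ne_zero hs)).congr_deriv ?_
    field_simp
    ring
  exact h.exp.congr_deriv (by ring)

section FiniteMeasure

variable (μ : Measure ℝ) [IsFiniteMeasure μ] (R : ℝ) {s : ℝ}

lemma integrable_exp_neg_sq_div (hs : 0 < s) :
    Integrable (fun x => Real.exp (-(x - R) ^ 2 / (2 * s))) μ := by
  refine Integrable.of_bound (by fun_prop) 1 (ae_of_all _ fun x => ?_)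
  rw [Real.norm_eq_abs, abs_of_pos (Real.exp_pos _)]
  exact exp_neg_sq_div_le_one hs _

lemma integrable_sub_sq_mul_exp_neg_sq_div (hs : 0 < s) :
    Integrable (fun x => (x - R) ^ 2 * Real.exp (-(x - R) ^ 2 / (2 * s))) μ := by
  refine Integrable.of_bound (by fun_prop) (2 * s) (ae_of_all _ fun x => ?_)
  rw [Real.norm_eq_abs, abs_of_nonneg (by positivity)]
  exact sq_mul_exp_neg_sq_div_le hs _

lemma integrable_sub_mul_exp_neg_sq_div (hs : 0 < s) :
    Integrable (fun x => (x - R) * Real.exp (-(x - R) ^ 2 / (2 * s))) μ := by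
  refine Integrable.of_bound (by fun_prop) (1 + 2 * s) (ae_of_all _ fun x => ?_)
  rw [norm_mul, Real.norm_eq_abs, Real.norm_eq_abs, abs_of_pos (Real.exp_pos _)]
  have h1 := exp_neg_sq_div_le_one hs (x - R)
  have h2 := sq_mul_exp_neg_sq_div_le hs (x - R)
  have h3 : |x - R| ≤ 1 + (x - R) ^ 2 := by
    rw [← sq_abs (x - R)]
    nlinarith [sq_nonneg (|x - R| - 1)]
  nlinarith [mul_le_mul_of_nonneg_right h3 (Real.exp_pos (-(x - R) ^ 2 / (2 * s))).le]

/-- Differentiation under the integral sign with respect to the variance. -/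
lemma hasDerivAt_integral_exp_neg_sq_div (hs : 0 < s) :
    HasDerivAt (fun t => ∫ x, Real.exp (-(x - R) ^ 2 / (2 * t)) ∂μ)
      ((∫ x, (x - R) ^ 2 * Real.exp (-(x - R) ^ 2 / (2 * s)) ∂μ) / (2 * s ^ 2)) s := by
  rw [← integral_div]
  refine (hasDerivAt_integral_of_dominated_loc_of_deriv_le
    (F := fun t x => Real.exp (-(x - R) ^ 2 / (2 * t)))
    (F' := fun t x => (x - R) ^ 2 * Real.exp (-(x - R) ^ 2 / (2 * t)) / (2 * t ^ 2))
    (bound := fun _ => 2 / s) (Ioi_mem_nhds (half_lt_self hs))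
    (.of_forall fun t => by fun_prop) (integrable_exp_neg_sq_div μ R hs) (by fun_prop)
    (ae_of_all _ fun x t ht => ?_) (integrable_const _)
    (ae_of_all _ fun x t ht => ?_)).2
  · have ht' : s / 2 < t := ht
    have ht0 : 0 < t := (half_pos hs).trans ht'
    rw [Real.norm_eq_abs, abs_of_nonneg (by positivity)]
    calc (x - R) ^ 2 * Real.exp (-(x - R) ^ 2 / (2 * t)) / (2 * t ^ 2)
        ≤ 2 * t / (2 * t ^ 2) := by
          exact div_le_div_of_nonneg_right (sq_mul_exp_neg_sq_div_le ht0 _) (by positivity)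
      _ = 1 / t := by field_simp
      _ ≤ 2 / s := by
          rw [div_le_div_iff₀ ht0 hs]
          linarith
  · exact hasDerivAt_exp_neg_sq_div ((half_pos hs).trans ht).ne' _

lemma integral_mul_exp_neg_sq_div (hs : 0 < s) :
    ∫ x, x * Real.exp (-(x - R) ^ 2 / (2 * s)) ∂μ =
      (∫ x, (x - R) * Real.exp (-(x - R) ^ 2 / (2 * s)) ∂μ) +
        R * ∫ x, Real.exp (-(x - R) ^ 2 / (2 * s)) ∂μ := by
  rw [← integral_const_mul, ← integral_add (integrable_sub_mul_exp_neg_sq_div μ R hs)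
    ((integrable_exp_neg_sq_div μ R hs).const_mul R)]
  congr 1 with x
  ring

lemma integral_sq_mul_exp_neg_sq_div (hs : 0 < s) :
    ∫ x, x ^ 2 * Real.exp (-(x - R) ^ 2 / (2 * s)) ∂μ =
      (∫ x, (x - R) ^ 2 * Real.exp (-(x - R) ^ 2 / (2 * s)) ∂μ) +
        (2 * R * (∫ x, (x - R) * Real.exp (-(x - R) ^ 2 / (2 * s)) ∂μ) +
          R ^ 2 * ∫ x, Real.exp (-(x - R) ^ 2 / (2 * s)) ∂μ) := by
  have h0 := (integrable_exp_neg_sq_div μ R hs).const_mul (R ^ 2)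
  have h1 := (integrable_sub_mul_exp_neg_sq_div μ R hs).const_mul (2 * R)
  rw [← integral_const_mul, ← integral_const_mul, ← integral_add h1 h0,
    ← integral_add (integrable_sub_sq_mul_exp_neg_sq_div μ R hs) (h1.fun_add h0)]
  congr 1 with x
  ring

end FiniteMeasure

lemma isProbabilityMeasure_P0 {ρ : ℝ} (hρ : ρ ∈ Set.Icc (0 : ℝ) 1) :
    IsProbabilityMeasure (P0 ρ) := by
  constructor
  simp only [P0, Measure.add_apply, Measure.smul_apply, measure_univ, smul_eq_mul, mul_one]
  rw [← ENNReal.ofReal_add hρ.1 (sub_nonneg.2 hρ.2)]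
  simp

/-- the log-partition as a function of the variance `s = Σ²`,
`s ↦ log Z(R,√s)`, has derivative at `s = Σ²` equal to
`((f_a(R,Σ) − R)² + f_c(R,Σ))/(2Σ⁴)`. -/
theorem stmt1 (ρ : ℝ) (hρ : ρ ∈ Set.Icc (0 : ℝ) 1) (R σ : ℝ) (hσ : 0 < σ) :
    HasDerivAt (fun s => Real.log (Zpart ρ R (Real.sqrt s)))
      (((fa ρ R σ - R) ^ 2 + fc ρ R σ) / (2 * σ ^ 4)) (σ ^ 2) := by
  have := isProbabilityMeasure_P0 hρ
  have hs : 0 < σ ^ 2 := by positivity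
  have hZ : 0 < ∫ x, Real.exp (-(x - R) ^ 2 / (2 * σ ^ 2)) ∂(P0 ρ) :=
    integral_exp_pos (integrable_exp_neg_sq_div _ R hs)
  have hderiv := (hasDerivAt_integral_exp_neg_sq_div (P0 ρ) R hs).log hZ.ne'
  have heq : (fun s => Real.log (Zpart ρ R (Real.sqrt s))) =ᶠ[nhds (σ ^ 2)]
      fun s => Real.log (∫ x, Real.exp (-(x - R) ^ 2 / (2 * s)) ∂(P0 ρ)) := by
    filter_upwards [Ioi_mem_nhds hs] with s hs'
    simp only [Zpart, Real.sq_sqrt (le_of_lt (Set.mem_Ioi.1 hs'))]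
  refine (hderiv.congr_of_eventuallyEq heq).congr_deriv ?_
  simp only [fc, fa, Zpart]
  rw [integral_mul_exp_neg_sq_div _ R hs, integral_sq_mul_exp_neg_sq_div _ R hs]
  generalize ∫ x, Real.exp (-(x - R) ^ 2 / (2 * σ ^ 2)) ∂(P0 ρ) = Z at hZ ⊢
  generalize ∫ x, (x - R) * Real.exp (-(x - R) ^ 2 / (2 * σ ^ 2)) ∂(P0 ρ) = M₁
  generalize ∫ x, (x - R) ^ 2 * Real.exp (-(x - R) ^ 2 / (2 * σ ^ 2)) ∂(P0 ρ) = M₂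
  field_simp
  ring
end

section
/- (Proposition 1: iterative thresholding vs. mean field.) Let ρ ∈ [0,1], Δ > 0, F ∈ ℝ^{M×N} with normalized columns ∑_μ F_{μi}² = 1 for every i, and y ∈ ℝ^M. A vector a ∈ ℝ^N is a fixed point of the iterative-thresholding map a ↦ η_Δ(a + Fᵀ(y − F a)), where η_Δ acts componentwise via the thresholding function η_Δ(x) = f_a(x,√Δ), if and only if the point (R,Σ,a,c) with Σ_i = √Δ, R_i = a_i + (Fᵀ(y − F a))_i and c_i = f_c(R_i,Σ_i) is a stationary point of the unconstrained mean-field free energy F_MF (all partial derivatives with respect to each R_i, Σ_i, a_i and c_i vanish). -/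
open MeasureTheory ProbabilityTheory

/-- The (unconstrained) mean-field free energy `F_MF(R,Σ,a,c)`. -/
noncomputable def FMF (ρ : ℝ) {M N : ℕ} (F : Fin M → Fin N → ℝ) (y : Fin M → ℝ)
    (Δ : ℝ) (R Sv a c : Fin N → ℝ) : ℝ :=
  (M : ℝ) / 2 * Real.log (2 * Real.pi * Δ)
    + 1 / (2 * Δ) * ∑ μ, ((y μ - ∑ i, F μ i * a i) ^ 2 + ∑ i, F μ i ^ 2 * c i)
    - ∑ i, (Real.log (Zpart ρ (R i) (Sv i)) + (c i + (a i - R i) ^ 2) / (2 * Sv i ^ 2))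

/-- The Gaussian weight `exp(-(x-R)²/(2σ²))`. -/
noncomputable def gaussWeight (R σ x : ℝ) : ℝ := Real.exp (-(x - R) ^ 2 / (2 * σ ^ 2))

lemma gaussWeight_pos (R σ x : ℝ) : 0 < gaussWeight R σ x := Real.exp_pos _

lemma gaussWeight_le_one (R σ x : ℝ) : gaussWeight R σ x ≤ 1 := by
  refine Real.exp_le_one_iff.2 ?_
  rw [neg_div]
  exact neg_nonpos.2 (by positivity)

lemma one_add_mul_gaussWeight_le (R σ x : ℝ) :
    (1 + (x - R) ^ 2 / (2 * σ ^ 2)) * gaussWeight R σ x ≤ 1 := by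
  have h := Real.add_one_le_exp ((x - R) ^ 2 / (2 * σ ^ 2))
  calc _ ≤ Real.exp ((x - R) ^ 2 / (2 * σ ^ 2)) * gaussWeight R σ x := by
        gcongr
        · exact (gaussWeight_pos _ _ _).le
        · linarith
    _ = 1 := by rw [gaussWeight, ← Real.exp_add, neg_div, add_neg_cancel, Real.exp_zero]

lemma sq_mul_gaussWeight_le (R x : ℝ) {σ : ℝ} (hσ : 0 < σ) :
    (x - R) ^ 2 * gaussWeight R σ x ≤ 2 * σ ^ 2 := by
  have h := one_add_mul_gaussWeight_le R σ x
  have hpos := gaussWeight_pos R σ x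
  have h' : (x - R) ^ 2 / (2 * σ ^ 2) * gaussWeight R σ x ≤ 1 := by linarith
  rwa [div_mul_eq_mul_div, div_le_one (by positivity)] at h'

lemma abs_mul_gaussWeight_le (R x : ℝ) {σ : ℝ} (hσ : 0 < σ) :
    |x - R| * gaussWeight R σ x ≤ 1 + 2 * σ ^ 2 := by
  have h := sq_mul_gaussWeight_le R x hσ
  have hpos := gaussWeight_pos R σ x
  have h1 := gaussWeight_le_one R σ x
  have h2 : |x - R| ≤ 1 + (x - R) ^ 2 := by
    nlinarith [sq_abs (x - R), sq_nonneg (|x - R| - 1), abs_nonneg (x - R)]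
  nlinarith

lemma continuous_gaussWeight (R σ : ℝ) : Continuous (gaussWeight R σ) := by
  unfold gaussWeight
  fun_prop

section FiniteMeasure

variable (m : Measure ℝ) [IsFiniteMeasure m]

lemma integrable_gaussWeight (R σ : ℝ) : Integrable (gaussWeight R σ) m :=
  .of_bound (continuous_gaussWeight R σ).aestronglyMeasurable 1 <| .of_forall fun x => by
    rw [Real.norm_of_nonneg (gaussWeight_pos _ _ _).le]
    exact gaussWeight_le_one R σ x

lemma integrable_sub_mul_gaussWeight (R : ℝ) {σ : ℝ} (hσ : 0 < σ) :
    Integrable (fun x => (x - R) * gaussWeight R σ x) m := by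
  have := continuous_gaussWeight R σ
  refine .of_bound (by fun_prop) (1 + 2 * σ ^ 2) <| .of_forall fun x => ?_
  rw [norm_mul, Real.norm_of_nonneg (gaussWeight_pos _ _ _).le]
  exact abs_mul_gaussWeight_le R x hσ

lemma integrable_sub_sq_mul_gaussWeight (R : ℝ) {σ : ℝ} (hσ : 0 < σ) :
    Integrable (fun x => (x - R) ^ 2 * gaussWeight R σ x) m := by
  have := continuous_gaussWeight R σ
  refine .of_bound (by fun_prop) (2 * σ ^ 2) <| .of_forall fun x => ?_
  rw [Real.norm_of_nonneg (mul_nonneg (sq_nonneg _) (gaussWeight_pos _ _ _).le)]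
  exact sq_mul_gaussWeight_le R x hσ

lemma hasDerivAt_integral_gaussWeight_left (R : ℝ) {σ : ℝ} (hσ : 0 < σ) :
    HasDerivAt (fun t => ∫ x, gaussWeight t σ x ∂m)
      ((∫ x, (x - R) * gaussWeight R σ x ∂m) / σ ^ 2) R := by
  have hcont := continuous_gaussWeight R σ
  rw [← integral_div]
  refine (hasDerivAt_integral_of_dominated_loc_of_deriv_le (s := Set.univ)
    (F' := fun t x => (x - t) * gaussWeight t σ x / σ ^ 2)
    (bound := fun _ => (1 + 2 * σ ^ 2) / σ ^ 2) Filter.univ_mem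
    (.of_forall fun t => (continuous_gaussWeight t σ).aestronglyMeasurable)
    (integrable_gaussWeight m R σ) (by fun_prop) (.of_forall fun x t _ => ?_)
    (integrable_const _) (.of_forall fun x t _ => ?_)).2
  · rw [norm_div, norm_mul, Real.norm_of_nonneg (gaussWeight_pos _ _ _).le,
      Real.norm_of_nonneg (sq_nonneg σ)]
    gcongr
    exact abs_mul_gaussWeight_le t x hσ
  · have h := (((((hasDerivAt_id t).const_sub x).pow 2).neg).div_const (2 * σ ^ 2)).exp
    refine h.congr_deriv ?_
    simp only [gaussWeight, id, Pi.neg_apply, Pi.pow_apply]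
    field_simp
    ring

lemma hasDerivAt_integral_gaussWeight_right (R : ℝ) {σ : ℝ} (hσ : 0 < σ) :
    HasDerivAt (fun t => ∫ x, gaussWeight R t x ∂m)
      ((∫ x, (x - R) ^ 2 * gaussWeight R σ x ∂m) / σ ^ 3) σ := by
  have hcont := continuous_gaussWeight R σ
  rw [← integral_div]
  refine (hasDerivAt_integral_of_dominated_loc_of_deriv_le (s := Set.Ioi (σ / 2))
    (F' := fun t x => (x - R) ^ 2 * gaussWeight R t x / t ^ 3)
    (bound := fun _ => 2 / (σ / 2)) (Ioi_mem_nhds (by linarith))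
    (.of_forall fun t => (continuous_gaussWeight R t).aestronglyMeasurable)
    (integrable_gaussWeight m R σ) (by fun_prop) (.of_forall fun x t ht => ?_)
    (integrable_const _) (.of_forall fun x t ht => ?_)).2
  · have ht' : σ / 2 < t := ht
    have ht0 : 0 < t := by linarith
    rw [Real.norm_of_nonneg (div_nonneg (mul_nonneg (sq_nonneg _) (gaussWeight_pos _ _ _).le)
      (by positivity))]
    calc _ ≤ 2 * t ^ 2 / t ^ 3 :=
          div_le_div_of_nonneg_right (sq_mul_gaussWeight_le R x ht0) (by positivity)
      _ = 2 / t := by field_simp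
      _ ≤ 2 / (σ / 2) := by gcongr
  · have ht' : σ / 2 < t := ht
    have ht0 : 0 < t := by linarith
    have h := ((hasDerivAt_const t (-(x - R) ^ 2)).div (((hasDerivAt_id t).pow 2).const_mul 2)
      (by simp; positivity)).exp
    refine h.congr_deriv ?_
    simp only [gaussWeight, id, Pi.pow_apply, Pi.div_apply]
    field_simp
    ring

lemma integral_id_mul_gaussWeight (R : ℝ) {σ : ℝ} (hσ : 0 < σ) :
    ∫ x, x * gaussWeight R σ x ∂m =
      ∫ x, (x - R) * gaussWeight R σ x ∂m + R * ∫ x, gaussWeight R σ x ∂m := by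
  rw [← integral_const_mul, ← integral_add (integrable_sub_mul_gaussWeight m R hσ)
    ((integrable_gaussWeight m R σ).const_mul R)]
  congr 1 with x
  ring

lemma integral_sq_mul_gaussWeight (R : ℝ) {σ : ℝ} (hσ : 0 < σ) :
    ∫ x, x ^ 2 * gaussWeight R σ x ∂m =
      ∫ x, (x - R) ^ 2 * gaussWeight R σ x ∂m
        + 2 * R * ∫ x, (x - R) * gaussWeight R σ x ∂m
        + R ^ 2 * ∫ x, gaussWeight R σ x ∂m := by
  have h1 := (integrable_sub_mul_gaussWeight m R hσ).const_mul (2 * R)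
  have h2 := integrable_sub_sq_mul_gaussWeight m R hσ
  rw [← integral_const_mul, ← integral_const_mul, ← integral_add h2 h1,
    ← integral_add (h2.fun_add h1) ((integrable_gaussWeight m R σ).const_mul _)]
  congr 1 with x
  ring

end FiniteMeasure

instance isFiniteMeasure_P0 (ρ : ℝ) : IsFiniteMeasure (P0 ρ) := by
  unfold P0
  have h (r : ℝ) (m : Measure ℝ) [IsFiniteMeasure m] :
      IsFiniteMeasure (ENNReal.ofReal r • m) := m.smul_finite ENNReal.ofReal_ne_top
  infer_instance

lemma P0_ne_zero {ρ : ℝ} (hρ : ρ ∈ Set.Icc (0 : ℝ) 1) : P0 ρ ≠ 0 := by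
  intro h
  have h1 : P0 ρ Set.univ = 1 := by
    simp [P0, ← ENNReal.ofReal_add hρ.1 (sub_nonneg.2 hρ.2)]
  simp [h] at h1

lemma Zpart_pos {ρ : ℝ} (hρ : ρ ∈ Set.Icc (0 : ℝ) 1) (R σ : ℝ) : 0 < Zpart ρ R σ :=
  have : NeZero (P0 ρ) := ⟨P0_ne_zero hρ⟩
  integral_exp_pos (integrable_gaussWeight (P0 ρ) R σ)

lemma hasDerivAt_log_Zpart_left {ρ : ℝ} (hρ : ρ ∈ Set.Icc (0 : ℝ) 1) (R : ℝ) {σ : ℝ}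
    (hσ : 0 < σ) :
    HasDerivAt (fun t => Real.log (Zpart ρ t σ)) ((fa ρ R σ - R) / σ ^ 2) R := by
  have hZ := Zpart_pos hρ R σ
  have hd : HasDerivAt (fun t => Zpart ρ t σ) _ R :=
    hasDerivAt_integral_gaussWeight_left (P0 ρ) R hσ
  refine (hd.log hZ.ne').congr_deriv ?_
  have h1 : ∫ x, x * Real.exp (-(x - R) ^ 2 / (2 * σ ^ 2)) ∂(P0 ρ) = _ + R * Zpart ρ R σ :=
    integral_id_mul_gaussWeight (P0 ρ) R hσ
  rw [fa, h1]
  field_simp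
  ring

lemma hasDerivAt_log_Zpart_right {ρ : ℝ} (hρ : ρ ∈ Set.Icc (0 : ℝ) 1) (R : ℝ) {σ : ℝ}
    (hσ : 0 < σ) :
    HasDerivAt (fun t => Real.log (Zpart ρ R t)) ((fc ρ R σ + (fa ρ R σ - R) ^ 2) / σ ^ 3) σ := by
  have hZ := Zpart_pos hρ R σ
  have hd : HasDerivAt (fun t => Zpart ρ R t) _ σ :=
    hasDerivAt_integral_gaussWeight_right (P0 ρ) R hσ
  refine (hd.log hZ.ne').congr_deriv ?_
  have h1 : ∫ x, x * Real.exp (-(x - R) ^ 2 / (2 * σ ^ 2)) ∂(P0 ρ) = _ + R * Zpart ρ R σ :=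
    integral_id_mul_gaussWeight (P0 ρ) R hσ
  have h2 : ∫ x, x ^ 2 * Real.exp (-(x - R) ^ 2 / (2 * σ ^ 2)) ∂(P0 ρ) =
      _ + R ^ 2 * Zpart ρ R σ := integral_sq_mul_gaussWeight (P0 ρ) R hσ
  rw [fc, fa, h1, h2]
  field_simp
  ring

lemma hasDerivAt_sum_update {ι : Type*} [Fintype ι] [DecidableEq ι] (g : ι → ℝ → ℝ) (v : ι → ℝ)
    (i : ι) {g' : ℝ} (h : HasDerivAt (g i) g' (v i)) :
    HasDerivAt (fun t => ∑ j, g j (Function.update v i t j)) g' (v i) := by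
  have heq : (fun t => ∑ j, g j (Function.update v i t j)) =
      fun t => g i t + ∑ j ∈ Finset.univ.erase i, g j (v j) := by
    funext t
    rw [← Finset.add_sum_erase _ _ (Finset.mem_univ i), Function.update_self]
    congr 1
    refine Finset.sum_congr rfl fun j hj => ?_
    rw [Function.update_of_ne (Finset.ne_of_mem_erase hj)]
  rw [heq]
  exact h.add_const _

section FreeEnergy

variable {ρ : ℝ} {M N : ℕ} (F : Fin M → Fin N → ℝ) (y : Fin M → ℝ) (Δ : ℝ)
  (R Sv a c : Fin N → ℝ) (i : Fin N)

lemma hasDerivAt_FMF_R (hρ : ρ ∈ Set.Icc (0 : ℝ) 1) (hSv : 0 < Sv i) :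
    HasDerivAt (fun t => FMF ρ F y Δ (Function.update R i t) Sv a c)
      ((a i - fa ρ (R i) (Sv i)) / Sv i ^ 2) (R i) := by
  have hq := ((((hasDerivAt_id (R i)).const_sub (a i)).fun_pow 2).const_add (c i)).div_const
    (2 * Sv i ^ 2)
  have h := (hasDerivAt_sum_update
    (fun j t => Real.log (Zpart ρ t (Sv j)) + (c j + (a j - t) ^ 2) / (2 * Sv j ^ 2)) R i
    ((hasDerivAt_log_Zpart_left hρ (R i) hSv).add hq)).const_sub
    ((M : ℝ) / 2 * Real.log (2 * Real.pi * Δ)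
      + 1 / (2 * Δ) * ∑ μ, ((y μ - ∑ i, F μ i * a i) ^ 2 + ∑ i, F μ i ^ 2 * c i))
  refine h.congr_deriv ?_
  simp only [id]
  field_simp
  ring

lemma hasDerivAt_FMF_Sv (hρ : ρ ∈ Set.Icc (0 : ℝ) 1) (hSv : 0 < Sv i) :
    HasDerivAt (fun t => FMF ρ F y Δ R (Function.update Sv i t) a c)
      ((c i + (a i - R i) ^ 2 - (fc ρ (R i) (Sv i) + (fa ρ (R i) (Sv i) - R i) ^ 2)) / Sv i ^ 3)
      (Sv i) := by
  have hq := (hasDerivAt_const (Sv i) (c i + (a i - R i) ^ 2)).fun_div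
    (((hasDerivAt_id (Sv i)).fun_pow 2).const_mul 2) (by simp only [id]; positivity)
  have h := (hasDerivAt_sum_update
    (fun j t => Real.log (Zpart ρ (R j) t) + (c j + (a j - R j) ^ 2) / (2 * t ^ 2)) Sv i
    ((hasDerivAt_log_Zpart_right hρ (R i) hSv).add hq)).const_sub
    ((M : ℝ) / 2 * Real.log (2 * Real.pi * Δ)
      + 1 / (2 * Δ) * ∑ μ, ((y μ - ∑ i, F μ i * a i) ^ 2 + ∑ i, F μ i ^ 2 * c i))
  refine h.congr_deriv ?_
  simp only [id]
  field_simp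
  ring

lemma hasDerivAt_FMF_a :
    HasDerivAt (fun t => FMF ρ F y Δ R Sv (Function.update a i t) c)
      (-(∑ μ, F μ i * (y μ - ∑ j, F μ j * a j)) / Δ - (a i - R i) / Sv i ^ 2) (a i) := by
  have hlin (μ : Fin M) := hasDerivAt_sum_update (fun j t => F μ j * t) a i
    ((hasDerivAt_id (a i)).const_mul (F μ i))
  have hfit := ((HasDerivAt.fun_sum (u := Finset.univ) fun μ _ =>
    (((hlin μ).const_sub (y μ)).fun_pow 2).add_const (∑ j, F μ j ^ 2 * c j)).const_mul
    (1 / (2 * Δ))).const_add ((M : ℝ) / 2 * Real.log (2 * Real.pi * Δ))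
  have hq := ((((hasDerivAt_id (a i)).sub_const (R i)).fun_pow 2).const_add (c i)).div_const
    (2 * Sv i ^ 2)
  have h := hfit.sub (hasDerivAt_sum_update
    (fun j t => Real.log (Zpart ρ (R j) (Sv j)) + (c j + (t - R j) ^ 2) / (2 * Sv j ^ 2)) a i
    (hq.const_add (Real.log (Zpart ρ (R i) (Sv i)))))
  refine h.congr_deriv ?_
  simp only [id, Function.update_eq_self]
  congr 1
  · rw [Finset.mul_sum, ← Finset.sum_neg_distrib, Finset.sum_div]
    refine Finset.sum_congr rfl fun μ _ => ?_
    field_simp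
    ring
  · field_simp
    ring

lemma hasDerivAt_FMF_c :
    HasDerivAt (fun t => FMF ρ F y Δ R Sv a (Function.update c i t))
      ((∑ μ, F μ i ^ 2) / (2 * Δ) - 1 / (2 * Sv i ^ 2)) (c i) := by
  have hlin (μ : Fin M) := hasDerivAt_sum_update (fun j t => F μ j ^ 2 * t) c i
    ((hasDerivAt_id (c i)).const_mul (F μ i ^ 2))
  have hfit := ((HasDerivAt.fun_sum (u := Finset.univ) fun μ _ =>
    (hlin μ).const_add ((y μ - ∑ j, F μ j * a j) ^ 2)).const_mul
    (1 / (2 * Δ))).const_add ((M : ℝ) / 2 * Real.log (2 * Real.pi * Δ))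
  have hq := ((hasDerivAt_id (c i)).add_const ((a i - R i) ^ 2)).div_const (2 * Sv i ^ 2)
  have h := hfit.sub (hasDerivAt_sum_update
    (fun j t => Real.log (Zpart ρ (R j) (Sv j)) + (t + (a j - R j) ^ 2) / (2 * Sv j ^ 2)) c i
    (hq.const_add (Real.log (Zpart ρ (R i) (Sv i)))))
  refine h.congr_deriv ?_
  simp only [mul_one]
  ring

end FreeEnergy

/-- Proposition 1: with normalized columns `∑_μ F_{μi}² = 1`, a vector `a`
is a fixed point of iterative thresholding `a ↦ η_Δ(a + Fᵀ(y − F a))`, where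
`η_Δ(x) = f_a(x,√Δ)` acts componentwise, iff the point `(R,Σ,a,c)` with `Σ_i = √Δ`,
`R_i = a_i + (Fᵀ(y − F a))_i`, `c_i = f_c(R_i,Σ_i)` is a stationary point of the
unconstrained mean-field free energy. -/
theorem stmt6 (ρ : ℝ) (hρ : ρ ∈ Set.Icc (0 : ℝ) 1) {M N : ℕ}
    (F : Fin M → Fin N → ℝ) (y : Fin M → ℝ) (Δ : ℝ) (hΔ : 0 < Δ)
    (hF : ∀ i, ∑ μ, F μ i ^ 2 = 1) (a : Fin N → ℝ)
    (R Sv c : Fin N → ℝ)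
    (hR : ∀ i, R i = a i + ∑ μ, F μ i * (y μ - ∑ j, F μ j * a j))
    (hSv : ∀ i, Sv i = Real.sqrt Δ)
    (hc : ∀ i, c i = fc ρ (R i) (Sv i)) :
    (∀ i, a i = fa ρ (a i + ∑ μ, F μ i * (y μ - ∑ j, F μ j * a j)) (Real.sqrt Δ))
    ↔ ((∀ i, HasDerivAt (fun t => FMF ρ F y Δ (Function.update R i t) Sv a c) 0 (R i)) ∧
       (∀ i, HasDerivAt (fun t => FMF ρ F y Δ R (Function.update Sv i t) a c) 0 (Sv i)) ∧
       (∀ i, HasDerivAt (fun t => FMF ρ F y Δ R Sv (Function.update a i t) c) 0 (a i)) ∧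
       (∀ i, HasDerivAt (fun t => FMF ρ F y Δ R Sv a (Function.update c i t)) 0 (c i))) := by
  have hpos (i : Fin N) : 0 < Sv i := hSv i ▸ Real.sqrt_pos.2 hΔ
  have hsq (i : Fin N) : Sv i ^ 2 = Δ := by rw [hSv i, Real.sq_sqrt hΔ.le]
  simp only [← hR]
  constructor
  · intro h
    have hfa (i : Fin N) : fa ρ (R i) (Sv i) = a i := by rw [hSv i, ← h i]
    refine ⟨fun i => ?_, fun i => ?_, fun i => ?_, fun i => ?_⟩
    · exact (hasDerivAt_FMF_R F y Δ R Sv a c i hρ (hpos i)).congr_deriv (by simp [hfa])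
    · exact (hasDerivAt_FMF_Sv F y Δ R Sv a c i hρ (hpos i)).congr_deriv (by simp [hfa, hc])
    · refine (hasDerivAt_FMF_a F y Δ R Sv a c i).congr_deriv ?_
      rw [hsq, hR i]
      ring
    · exact (hasDerivAt_FMF_c F y Δ R Sv a c i).congr_deriv (by rw [hsq, hF, sub_self])
  · rintro ⟨h, -⟩ i
    have h0 := (hasDerivAt_FMF_R F y Δ R Sv a c i hρ (hpos i)).unique (h i)
    rw [div_eq_zero_iff, or_iff_left (pow_pos (hpos i) 2).ne', sub_eq_zero] at h0
    rwa [← hSv i]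
end

section
/- (g_out is the ω-score.) Let p : ℝ → ℝ be measurable and nonnegative, V > 0 and ω ∈ ℝ, and suppose there exists V' > V such that ∫ (1 + |z|)·p(z)·exp(−(z−ω)²/(2V')) dz < ∞ and Z_out(ω,V) > 0. Then the function ω' ↦ log Z_out(ω',V) has derivative at ω equal to g_out(ω,V). -/
open MeasureTheory

/-- Output-channel partition function `Z_out(ω,V) = ∫ p(z)·exp(−(z−ω)²/(2V)) dz`. -/
noncomputable def Zout (p : ℝ → ℝ) (ω V : ℝ) : ℝ :=
  ∫ z, p z * Real.exp (-(z - ω) ^ 2 / (2 * V))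

/-- The output function
`g_out(ω,V) = [∫ p(z)·(z−ω)·exp(−(z−ω)²/(2V)) dz]/(V·Z_out(ω,V))`. -/
noncomputable def gout (p : ℝ → ℝ) (ω V : ℝ) : ℝ :=
  (∫ z, p z * (z - ω) * Real.exp (-(z - ω) ^ 2 / (2 * V))) / (V * Zout p ω V)

/-- The normalized per-measurement partition function `Z^μ(ω,V) = (2πV)^{−1/2}·Z_out(ω,V)`. -/
noncomputable def Zmu (p : ℝ → ℝ) (ω V : ℝ) : ℝ :=
  (Real.sqrt (2 * Real.pi * V))⁻¹ * Zout p ω V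

/-- Sedrakyan's inequality for two terms. -/
theorem add_sq_div_add_le {a b s t : ℝ} (hs : 0 < s) (ht : 0 < t) :
    (a + b) ^ 2 / (s + t) ≤ a ^ 2 / s + b ^ 2 / t := by
  have h : a ^ 2 / s + b ^ 2 / t - (a + b) ^ 2 / (s + t)
      = (a * t - b * s) ^ 2 / (s * t * (s + t)) := by
    field_simp
    ring
  have : 0 ≤ (a * t - b * s) ^ 2 / (s * t * (s + t)) := by positivity
  linarith

/-- A Gaussian weight with a nearby centre is dominated by a wider Gaussian weight. -/
theorem exp_neg_sq_div_le_of_abs_sub_le {V V' ω x : ℝ} (hV : 0 < V) (hVV' : V < V')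
    (hx : |x - ω| ≤ 1) (z : ℝ) :
    Real.exp (-(z - x) ^ 2 / (2 * V))
      ≤ Real.exp (1 / (2 * (V' - V))) * Real.exp (-(z - ω) ^ 2 / (2 * V')) := by
  rw [← Real.exp_add, Real.exp_le_exp]
  have ht : 0 < V' - V := sub_pos.2 hVV'
  have h := add_sq_div_add_le (a := z - x) (b := x - ω)
    (mul_pos two_pos hV) (mul_pos two_pos ht)
  rw [show z - x + (x - ω) = z - ω by ring, show 2 * V + 2 * (V' - V) = 2 * V' by ring] at h
  have h1 : (x - ω) ^ 2 / (2 * (V' - V)) ≤ 1 / (2 * (V' - V)) := by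
    gcongr
    exact (sq_le_one_iff_abs_le_one _).2 hx
  rw [neg_div, neg_div]
  linarith

theorem hasDerivAt_exp_neg_sub_sq_div {V : ℝ} (hV : V ≠ 0) (z x : ℝ) :
    HasDerivAt (fun x => Real.exp (-(z - x) ^ 2 / (2 * V)))
      ((z - x) / V * Real.exp (-(z - x) ^ 2 / (2 * V))) x := by
  have h := ((((hasDerivAt_id x).const_sub z).pow 2).neg.div_const (2 * V)).exp
  refine h.congr_deriv ?_
  simp
  field_simp

/-- `Zout` may be differentiated in `ω` under the integral sign. -/
theorem hasDerivAt_Zout {p : ℝ → ℝ} (hp : Measurable p) (hp0 : ∀ z, 0 ≤ p z)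
    {V V' ω : ℝ} (hV : 0 < V) (hVV' : V < V')
    (hint : Integrable (fun z => (1 + |z|) * p z * Real.exp (-(z - ω) ^ 2 / (2 * V')))) :
    HasDerivAt (fun x => Zout p x V)
      (∫ z, p z * ((z - ω) / V * Real.exp (-(z - ω) ^ 2 / (2 * V)))) ω := by
  have hexp := fun x (hx : x ∈ Metric.closedBall ω 1) =>
    exp_neg_sq_div_le_of_abs_sub_le hV hVV' (by simpa [Real.dist_eq] using hx)
  have hF : Integrable (fun z => p z * Real.exp (-(z - ω) ^ 2 / (2 * V))) := by
    refine (hint.const_mul (Real.exp (1 / (2 * (V' - V))))).mono'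
      (by fun_prop) (.of_forall fun z => ?_)
    rw [Real.norm_of_nonneg (mul_nonneg (hp0 z) (Real.exp_pos _).le)]
    calc p z * Real.exp (-(z - ω) ^ 2 / (2 * V))
        ≤ ((1 + |z|) * p z) *
            (Real.exp (1 / (2 * (V' - V))) * Real.exp (-(z - ω) ^ 2 / (2 * V'))) := by
          refine mul_le_mul ?_ (hexp ω (by simp) z) (Real.exp_pos _).le
            (mul_nonneg (by positivity) (hp0 z))
          exact le_mul_of_one_le_left (hp0 z) (by linarith [abs_nonneg z])
      _ = _ := by ring
  refine (hasDerivAt_integral_of_dominated_loc_of_deriv_le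
    (F := fun x z => p z * Real.exp (-(z - x) ^ 2 / (2 * V)))
    (F' := fun x z => p z * ((z - x) / V * Real.exp (-(z - x) ^ 2 / (2 * V))))
    (Metric.closedBall_mem_nhds ω one_pos)
    (.of_forall fun x => by fun_prop) hF (by fun_prop)
    (.of_forall fun z x hx => ?_)
    (hint.const_mul ((|ω| + 1) / V * Real.exp (1 / (2 * (V' - V)))))
    (.of_forall fun z x _ => (hasDerivAt_exp_neg_sub_sq_div hV.ne' z x).const_mul (p z))).2
  have hzx : |z - x| ≤ (|ω| + 1) * (1 + |z|) := by
    have hx1 : |x - ω| ≤ 1 := by simpa [Real.dist_eq] using hx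
    have h1 := abs_sub z x
    have h2 := abs_sub_abs_le_abs_sub x ω
    nlinarith [mul_nonneg (abs_nonneg ω) (abs_nonneg z)]
  rw [norm_mul, norm_mul, norm_div, Real.norm_of_nonneg (hp0 z), Real.norm_of_nonneg hV.le,
    Real.norm_of_nonneg (Real.exp_pos _).le, Real.norm_eq_abs]
  calc p z * (|z - x| / V * Real.exp (-(z - x) ^ 2 / (2 * V)))
      ≤ p z * ((|ω| + 1) * (1 + |z|) / V *
          (Real.exp (1 / (2 * (V' - V))) * Real.exp (-(z - ω) ^ 2 / (2 * V')))) := by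
        have := hp0 z
        have := hexp x hx z
        gcongr
    _ = _ := by ring

/-- `g_out` is the ω-score: under a domination hypothesis at some `V' > V`
and `Z_out(ω,V) > 0`, the function `ω' ↦ log Z_out(ω',V)` has derivative `g_out(ω,V)`
at `ω`. -/
theorem stmt13 (p : ℝ → ℝ) (hp : Measurable p) (hp0 : ∀ z, 0 ≤ p z)
    (V ω : ℝ) (hV : 0 < V)
    (hdom : ∃ V' > V,
      Integrable (fun z => (1 + |z|) * p z * Real.exp (-(z - ω) ^ 2 / (2 * V'))))
    (hZ : 0 < Zout p ω V) :
    HasDerivAt (fun ω' => Real.log (Zout p ω' V)) (gout p ω V) ω := by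
  obtain ⟨V', hVV', hint⟩ := hdom
  refine ((hasDerivAt_Zout hp hp0 hV hVV' hint).log hZ.ne').congr_deriv ?_
  have h : ∫ z, p z * ((z - ω) / V * Real.exp (-(z - ω) ^ 2 / (2 * V)))
      = (∫ z, p z * (z - ω) * Real.exp (-(z - ω) ^ 2 / (2 * V))) / V := by
    rw [← integral_div]
    congr with z
    ring
  rw [h, gout, div_div]
end

section
/- (KL identity, Eq. (35).) Let p : ℝ → ℝ be measurable and nonnegative, V > 0 and ω ∈ ℝ, and suppose there exists V' > V such that ∫ (1 + z²)·p(z)·exp(−(z−ω)²/(2V')) dz < ∞ and Z_out(ω,V) > 0. Let Z^μ = (2πV)^{−1/2}·Z_out(ω,V), and let 𝓜 be the probability density 𝓜(z) = p(z)·(2πV)^{−1/2}·exp(−(z−ω)²/(2V))/Z^μ. Then, with the convention 0·log(0/0) = 0, −∫ 𝓜(z)·log(𝓜(z)/p(z)) dz = log Z^μ + (1/2)·(log(2πV) + 1 + V·(g'_out(ω,V) + g_out(ω,V)²)), where g'_out(ω,V) denotes the derivative at ω of the function ω' ↦ g_out(ω',V). -/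
open MeasureTheory

/-- Moving the centre of a Gaussian is absorbed by enlarging its variance. -/
lemma sq_div_sub_le_sq_sub_div {V V' : ℝ} (hV : 0 < V) (hVV' : V < V') (u d : ℝ) :
    u ^ 2 / (2 * V') - d ^ 2 / (2 * (V' - V)) ≤ (u - d) ^ 2 / (2 * V) := by
  have hV' : 0 < V' := hV.trans hVV'
  have hsub : 0 < V' - V := sub_pos.mpr hVV'
  have key : (u - d) ^ 2 / (2 * V) - (u ^ 2 / (2 * V') - d ^ 2 / (2 * (V' - V)))
      = ((V' - V) * u - V' * d) ^ 2 / (2 * V * V' * (V' - V)) := by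
    field_simp
    ring
  have : 0 ≤ ((V' - V) * u - V' * d) ^ 2 / (2 * V * V' * (V' - V)) := by positivity
  linarith

lemma one_add_sq_mul_exp_le {V V' : ℝ} (hV : 0 < V) (hVV' : V < V') {ω x : ℝ}
    (hx : x ∈ Metric.ball ω 1) (z : ℝ) :
    (1 + (z - x) ^ 2) * Real.exp (-(z - x) ^ 2 / (2 * V))
      ≤ (3 + 2 * (|ω| + 1) ^ 2) * Real.exp (1 / (2 * (V' - V)))
        * ((1 + z ^ 2) * Real.exp (-(z - ω) ^ 2 / (2 * V'))) := by
  have hsub : 0 < V' - V := sub_pos.mpr hVV'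
  have hd : |x - ω| < 1 := by simpa [Real.dist_eq] using hx
  have hd2 : (x - ω) ^ 2 ≤ 1 := by
    rw [← sq_abs]
    nlinarith [abs_nonneg (x - ω)]
  have hxa : |x| ≤ |ω| + 1 := by
    have := abs_sub_abs_le_abs_sub x ω
    linarith
  have hx2 : x ^ 2 ≤ (|ω| + 1) ^ 2 := by
    rw [← sq_abs]
    gcongr
  have hpoly : 1 + (z - x) ^ 2 ≤ (3 + 2 * (|ω| + 1) ^ 2) * (1 + z ^ 2) := by
    nlinarith [sq_nonneg (z + x), sq_nonneg (z * (|ω| + 1)), sq_nonneg z]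
  have hexp : Real.exp (-(z - x) ^ 2 / (2 * V))
      ≤ Real.exp (1 / (2 * (V' - V))) * Real.exp (-(z - ω) ^ 2 / (2 * V')) := by
    rw [← Real.exp_add, Real.exp_le_exp]
    have h := sq_div_sub_le_sq_sub_div hV hVV' (z - ω) (x - ω)
    have h1 : (x - ω) ^ 2 / (2 * (V' - V)) ≤ 1 / (2 * (V' - V)) := by gcongr
    rw [sub_sub_sub_cancel_right] at h
    rw [neg_div, neg_div]
    linarith
  calc _ ≤ ((3 + 2 * (|ω| + 1) ^ 2) * (1 + z ^ 2))
        * (Real.exp (1 / (2 * (V' - V))) * Real.exp (-(z - ω) ^ 2 / (2 * V'))) := by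
        gcongr
    _ = _ := by ring

section GaussianSmoothing

variable {p : ℝ → ℝ} {V V' ω : ℝ} {f f' : ℝ → ℝ} {A : ℝ}

lemma norm_mul_comp_sub_le (hp0 : ∀ z, 0 ≤ p z) (hV : 0 < V) (hVV' : V < V') (hA : 0 ≤ A)
    (hf : ∀ t, |f t| ≤ A * ((1 + t ^ 2) * Real.exp (-t ^ 2 / (2 * V))))
    {x : ℝ} (hx : x ∈ Metric.ball ω 1) (z : ℝ) :
    ‖p z * f (z - x)‖ ≤ A * ((3 + 2 * (|ω| + 1) ^ 2) * Real.exp (1 / (2 * (V' - V))))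
      * ((1 + z ^ 2) * p z * Real.exp (-(z - ω) ^ 2 / (2 * V'))) := by
  rw [Real.norm_eq_abs, abs_mul, abs_of_nonneg (hp0 z)]
  calc p z * |f (z - x)|
      ≤ p z * (A * ((3 + 2 * (|ω| + 1) ^ 2) * Real.exp (1 / (2 * (V' - V)))
        * ((1 + z ^ 2) * Real.exp (-(z - ω) ^ 2 / (2 * V'))))) :=
        mul_le_mul_of_nonneg_left ((hf _).trans
          (mul_le_mul_of_nonneg_left (one_add_sq_mul_exp_le hV hVV' hx z) hA)) (hp0 z)
    _ = _ := by ring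

lemma integrable_mul_comp_sub (hp : Measurable p) (hp0 : ∀ z, 0 ≤ p z) (hV : 0 < V)
    (hVV' : V < V')
    (hint : Integrable (fun z => (1 + z ^ 2) * p z * Real.exp (-(z - ω) ^ 2 / (2 * V'))))
    (hfm : Measurable f) (hA : 0 ≤ A)
    (hf : ∀ t, |f t| ≤ A * ((1 + t ^ 2) * Real.exp (-t ^ 2 / (2 * V)))) :
    Integrable (fun z => p z * f (z - ω)) :=
  (hint.const_mul _).mono' (by fun_prop) (ae_of_all _
    (norm_mul_comp_sub_le hp0 hV hVV' hA hf (Metric.mem_ball_self one_pos)))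

lemma hasDerivAt_integral_mul_comp_sub (hp : Measurable p) (hp0 : ∀ z, 0 ≤ p z) (hV : 0 < V)
    (hVV' : V < V')
    (hint : Integrable (fun z => (1 + z ^ 2) * p z * Real.exp (-(z - ω) ^ 2 / (2 * V'))))
    (hfm : Measurable f) (hfm' : Measurable f') (hA : 0 ≤ A)
    (hf : ∀ t, |f t| ≤ A * ((1 + t ^ 2) * Real.exp (-t ^ 2 / (2 * V))))
    (hf' : ∀ t, |f' t| ≤ A * ((1 + t ^ 2) * Real.exp (-t ^ 2 / (2 * V))))
    (hderiv : ∀ t, HasDerivAt f (f' t) t) :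
    HasDerivAt (fun x => ∫ z, p z * f (z - x)) (-∫ z, p z * f' (z - ω)) ω := by
  have h := (hasDerivAt_integral_of_dominated_loc_of_deriv_le
    (F := fun x z => p z * f (z - x)) (F' := fun x z => -(p z * f' (z - x)))
    (Metric.ball_mem_nhds ω one_pos)
    (Filter.Eventually.of_forall fun x => by fun_prop)
    (integrable_mul_comp_sub hp hp0 hV hVV' hint hfm hA hf)
    (by fun_prop)
    (ae_of_all _ fun z x hx => by
      rw [norm_neg]
      exact norm_mul_comp_sub_le hp0 hV hVV' hA hf' hx z)
    (hint.const_mul _)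
    (ae_of_all _ fun z x _ => by
      have := ((hderiv (z - x)).comp_const_sub z x).const_mul (p z)
      simpa using this)).2
  rwa [integral_neg] at h

end GaussianSmoothing

/-- KL identity, Eq. (35): with `Z^μ = (2πV)^{−1/2}·Z_out(ω,V)` and the
probability density `𝓜(z) = p(z)·(2πV)^{−1/2}·exp(−(z−ω)²/(2V))/Z^μ`, one has
`−∫ 𝓜(z)·log(𝓜(z)/p(z)) dz = log Z^μ + (1/2)(log(2πV) + 1 + V(g'_out + g_out²))`.
(The convention `0·log(0/0) = 0` holds automatically in Lean since `0/0 = 0` and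
`log 0 = 0`.) -/
theorem stmt15 (p : ℝ → ℝ) (hp : Measurable p) (hp0 : ∀ z, 0 ≤ p z)
    (V ω : ℝ) (hV : 0 < V)
    (hdom : ∃ V' > V,
      Integrable (fun z => (1 + z ^ 2) * p z * Real.exp (-(z - ω) ^ 2 / (2 * V'))))
    (hZ : 0 < Zout p ω V)
    (𝓜 : ℝ → ℝ)
    (h𝓜 : 𝓜 = fun z =>
      p z * (Real.sqrt (2 * Real.pi * V))⁻¹ * Real.exp (-(z - ω) ^ 2 / (2 * V)) / Zmu p ω V) :
    -(∫ z, 𝓜 z * Real.log (𝓜 z / p z))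
      = Real.log (Zmu p ω V)
        + 1 / 2 * (Real.log (2 * Real.pi * V) + 1
            + V * (deriv (fun ω' => gout p ω' V) ω + gout p ω V ^ 2)) := by
  obtain ⟨V', hVV', hint⟩ := hdom
  have hV0 : V ≠ 0 := hV.ne'
  set E : ℝ → ℝ := fun t => Real.exp (-t ^ 2 / (2 * V)) with hE
  have hEpos : ∀ t, 0 < E t := fun t => Real.exp_pos _
  have hEm : Measurable E := by fun_prop
  have hEd : ∀ t, HasDerivAt E (-(t * E t) / V) t := fun t => by
    have h : HasDerivAt E (E t * (-(((2 : ℕ) : ℝ) * t ^ (2 - 1)) / (2 * V))) t :=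
      ((hasDerivAt_pow 2 t).neg.div_const (2 * V)).exp
    refine h.congr_deriv ?_
    field_simp
    norm_num
  have hE1d : ∀ t, HasDerivAt (fun t => t * E t) (E t - t ^ 2 * E t / V) t := fun t => by
    have h : HasDerivAt (fun t => t * E t) (1 * E t + t * (-(t * E t) / V)) t :=
      (hasDerivAt_id t).mul (hEd t)
    exact h.congr_deriv (by ring)
  have hA : 0 ≤ 1 + 1 / V := by positivity
  have hVi : 0 < 1 / V := by positivity
  have bound : ∀ q : ℝ → ℝ, (∀ t, |q t| ≤ (1 + 1 / V) * (1 + t ^ 2)) →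
      ∀ t, |q t * E t| ≤ (1 + 1 / V) * ((1 + t ^ 2) * Real.exp (-t ^ 2 / (2 * V))) := by
    intro q hq t
    rw [abs_mul, abs_of_pos (hEpos t), ← mul_assoc]
    exact mul_le_mul_of_nonneg_right (hq t) (hEpos t).le
  have babs : ∀ t : ℝ, |t| ≤ 1 + t ^ 2 := fun t => by
    rw [← sq_abs]; nlinarith [sq_nonneg (|t| - 1), abs_nonneg t]
  have hb0 : ∀ t, |E t| ≤ (1 + 1 / V) * ((1 + t ^ 2) * Real.exp (-t ^ 2 / (2 * V))) := by
    intro t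
    have := bound (fun _ => 1) (fun t => by rw [abs_one]; nlinarith [sq_nonneg t]) t
    rwa [one_mul] at this
  have hb1 := bound (fun t => t) (fun t => by nlinarith [babs t, sq_nonneg t])
  have hb2 := bound (fun t => t ^ 2) (fun t => by
    rw [abs_of_nonneg (sq_nonneg t)]; nlinarith [sq_nonneg t])
  have hb0' : ∀ t, |-(t * E t) / V|
      ≤ (1 + 1 / V) * ((1 + t ^ 2) * Real.exp (-t ^ 2 / (2 * V))) := by
    intro t
    have := bound (fun t => -t / V) (fun t => by
      rw [abs_div, abs_neg, abs_of_pos hV, div_eq_mul_one_div]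
      nlinarith [babs t, sq_nonneg t, abs_nonneg t]) t
    convert this using 2
    ring
  have hb1' : ∀ t, |E t - t ^ 2 * E t / V|
      ≤ (1 + 1 / V) * ((1 + t ^ 2) * Real.exp (-t ^ 2 / (2 * V))) := by
    intro t
    have := bound (fun t => 1 - t ^ 2 * (1 / V)) (fun t => by
      rw [abs_le]; constructor <;> nlinarith [sq_nonneg t, mul_nonneg hVi.le (sq_nonneg t)]) t
    convert this using 2
    ring
  have I0 : Integrable (fun z => p z * E (z - ω)) :=
    integrable_mul_comp_sub hp hp0 hV hVV' hint hEm hA hb0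
  have I2 : Integrable (fun z => p z * ((z - ω) ^ 2 * E (z - ω))) :=
    integrable_mul_comp_sub hp hp0 hV hVV' hint (f := fun t => t ^ 2 * E t) (by fun_prop) hA hb2
  have D0 := hasDerivAt_integral_mul_comp_sub hp hp0 hV hVV' hint hEm
    (f' := fun t => -(t * E t) / V) (by fun_prop) hA hb0 hb0' hEd
  have D1 := hasDerivAt_integral_mul_comp_sub hp hp0 hV hVV' hint (f := fun t => t * E t)
    (f' := fun t => E t - t ^ 2 * E t / V) (by fun_prop) (by fun_prop) hA hb1 hb1' hE1d
  have hZe : ∀ x, Zout p x V = ∫ z, p z * E (z - x) := fun x => rfl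
  have hge : ∀ x, gout p x V = (∫ z, p z * ((z - x) * E (z - x))) / (V * Zout p x V) := by
    intro x
    simp only [gout, hE, mul_assoc]
  set Z := Zout p ω V with hZdef
  set N := ∫ z, p z * ((z - ω) * E (z - ω)) with hN
  set S := ∫ z, p z * ((z - ω) ^ 2 * E (z - ω)) with hS
  have e0 : (-∫ z, p z * (-((z - ω) * E (z - ω)) / V)) = N / V := by
    rw [hN, ← integral_neg, ← integral_div]
    congr 1; ext z; ring
  have e1 : (-∫ z, p z * (E (z - ω) - (z - ω) ^ 2 * E (z - ω) / V)) = S / V - Z := by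
    have : (fun z => p z * (E (z - ω) - (z - ω) ^ 2 * E (z - ω) / V))
        = fun z => p z * E (z - ω) - p z * ((z - ω) ^ 2 * E (z - ω)) / V := by
      ext z; ring
    rw [this, integral_sub I0 (I2.div_const V), integral_div, ← hZe ω]
    ring
  rw [e0] at D0
  rw [e1] at D1
  have hZ0 : Z ≠ 0 := hZ.ne'
  have hgd : deriv (fun x => gout p x V) ω
      = ((S / V - Z) * (V * Z) - N * (V * (N / V))) / (V * Z) ^ 2 := by
    have hfun : (fun x => gout p x V)
        = fun x => (∫ z, p z * ((z - x) * E (z - x))) / (V * ∫ z, p z * E (z - x)) :=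
      funext hge
    rw [hfun]
    exact (D1.div (D0.const_mul V) (mul_ne_zero hV0 hZ0)).deriv
  set s := Real.sqrt (2 * Real.pi * V) with hs
  have hspos : 0 < s := Real.sqrt_pos.mpr (by positivity)
  have hlogs : Real.log s = 1 / 2 * Real.log (2 * Real.pi * V) := by
    rw [hs, Real.log_sqrt (by positivity)]; ring
  have hZm : Zmu p ω V = s⁻¹ * Z := rfl
  have hlogZm : Real.log (Zmu p ω V) = Real.log Z - Real.log s := by
    rw [hZm, Real.log_mul (inv_ne_zero hspos.ne') hZ0, Real.log_inv]; ring
  have hM : ∀ z, 𝓜 z = p z * E (z - ω) / Z := by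
    intro z
    rw [h𝓜, hZm]
    simp only [hE]
    field_simp
  have hent : ∀ z, 𝓜 z * Real.log (𝓜 z / p z)
      = -(Real.log Z / Z) * (p z * E (z - ω))
        - 1 / (2 * V * Z) * (p z * ((z - ω) ^ 2 * E (z - ω))) := by
    intro z
    rcases (hp0 z).eq_or_lt with h | h
    · simp [hM, ← h]
    · have : 𝓜 z / p z = E (z - ω) / Z := by
        rw [hM]; field_simp
      rw [this, Real.log_div (hEpos _).ne' hZ0, hM]
      simp only [hE, Real.log_exp]
      field_simp
      ring
  have hint_ent : ∫ z, 𝓜 z * Real.log (𝓜 z / p z)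
      = -(Real.log Z / Z) * Z - 1 / (2 * V * Z) * S := by
    simp_rw [hent]
    rw [integral_sub (I0.const_mul _) (I2.const_mul _), integral_const_mul, integral_const_mul,
      ← hZe ω]
  rw [hint_ent, hgd, hge ω, hlogZm, mul_add, mul_add, ← hlogs, ← hZdef, ← hN]
  field_simp
  ring
end
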